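/- Let p, q be odd primes with p ≡ 1 (mod q), m ≥ 2, and G = ⟨s, t | t^p = s^{q^m} = 1, s⁻¹ t s = t^k⟩ where k has order q modulo p. Then the absolute center Z*(G) = {g ∈ G : α(g) = g for all α ∈ Aut(G)} equals ⟨s^{q^{m−1}}⟩, a cyclic group of order q. -/

import Mathlib

/-- Relations for the presentation `⟨s, t | t^p = s^(q^m) = 1, s⁻¹ t s = t^k⟩`,
with `s = of 0` and `t = of 1`. -/
def pqmRels (p q m k : ℕ) : Set (FreeGroup (Fin 2)) :=
  {FreeGroup.of 1 ^ p, FreeGroup.of 0 ^ (q ^ m),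
    (FreeGroup.of 0)⁻¹ * FreeGroup.of 1 * FreeGroup.of 0 * (FreeGroup.of 1 ^ k)⁻¹}

/-!
Let `e : G → ℤ/q^m` be the exponent of `s`; its kernel is `⟨t⟩`. An element fixed by all
automorphisms commutes with `s`, hence is a power `s ^ a`, because `k - 1` is invertible modulo `p`;
the automorphism `s ↦ s ^ (1 + q)`, `t ↦ t` then forces `q ^ (m - 1) ∣ a`. Conversely, an
automorphism `α` preserves `⟨t⟩` because `p` and `q` are coprime, and comparing the actions of `s`
and `α s` on `⟨t⟩` gives `e (α s) ≡ 1` modulo `q`. Hence `α z * z⁻¹` lies in `⟨t⟩` for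
`z = s ^ q ^ (m - 1)`. As `z` is central, so is `α z * z⁻¹`, and the center meets `⟨t⟩` trivially.
-/

section AbsoluteCenter

variable {G : Type*} [Group G]

variable (G) in
/-- The absolute center of a group: the subgroup of elements fixed by every automorphism. -/
def absoluteCenter : Subgroup G :=
  FixedPoints.subgroup (MulAut G) G

lemma mem_absoluteCenter_iff {g : G} : g ∈ absoluteCenter G ↔ ∀ α : MulAut G, α g = g :=
  Iff.rfl

lemma absoluteCenter_le_center : absoluteCenter G ≤ Subgroup.center G := fun _ hg =>
  Subgroup.mem_center_iff.2 fun x =>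
    mul_inv_eq_iff_eq_mul.1 (mem_absoluteCenter_iff.1 hg (MulAut.conj x))

end AbsoluteCenter

section ConjugationByPower

variable {G : Type*} [Group G] {s t x : G} {p k : ℕ}

lemma semiconjBy_pow_pow (h : SemiconjBy s (t ^ k) t) (c : ℕ) :
    SemiconjBy (s ^ c) (t ^ k ^ c) t := by
  induction c with
  | zero => simp
  | succ c ih =>
    rw [pow_succ s, pow_succ' k, pow_mul]
    exact ih.mul_left (h.pow_right (k ^ c))

lemma semiconjBy_pow_of_mem_zpowers (h : SemiconjBy s (t ^ k) t)
    (hx : x ∈ Subgroup.zpowers t) : SemiconjBy s (x ^ k) x := by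
  obtain ⟨j, rfl⟩ := Subgroup.mem_zpowers_iff.1 hx
  rw [← zpow_natCast, zpow_comm, zpow_natCast]
  exact h.zpow_right j

lemma exists_eq_pow_mul_of_closure_pair_eq_top (h : SemiconjBy s (t ^ k) t)
    (hs : IsOfFinOrder s) (hst : Subgroup.closure {s, t} = ⊤) (g : G) :
    ∃ a : ℕ, ∃ x ∈ Subgroup.zpowers t, g = s ^ a * x := by
  have mul_pow_s (a c : ℕ) {x : G} (hx : x ∈ Subgroup.zpowers t) :
      ∃ a' : ℕ, ∃ x' ∈ Subgroup.zpowers t, s ^ a * x * s ^ c = s ^ a' * x' :=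
    ⟨a + c, x ^ k ^ c, pow_mem hx _, by
      rw [mul_assoc, ← (semiconjBy_pow_pow (semiconjBy_pow_of_mem_zpowers h hx) c).eq,
        ← mul_assoc, pow_add]⟩
  have hg : g ∈ Subgroup.closure {s, t} := hst ▸ Subgroup.mem_top g
  induction hg using Subgroup.closure_induction_right with
  | one => exact ⟨0, 1, one_mem _, by simp⟩
  | mul_right g _ y hy ih =>
    obtain ⟨a, x, hx, rfl⟩ := ih
    rcases hy with rfl | rfl
    · simpa only [pow_one] using mul_pow_s a 1 hx
    · exact ⟨a, x * y, mul_mem hx (Subgroup.mem_zpowers y), mul_assoc _ _ _⟩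
  | mul_inv_cancel g _ y hy ih =>
    obtain ⟨a, x, hx, rfl⟩ := ih
    rcases hy with rfl | rfl
    · obtain ⟨c, hc⟩ := hs.mem_powers_iff_mem_zpowers.2 (inv_mem (Subgroup.mem_zpowers y))
      exact hc ▸ mul_pow_s a c hx
    · exact ⟨a, x * y⁻¹, mul_mem hx (inv_mem (Subgroup.mem_zpowers y)), mul_assoc _ _ _⟩

lemma eq_one_of_pow_eq_self (hk1 : IsUnit ((k : ZMod p) - 1)) (hxp : x ^ p = 1)
    (hxk : x ^ k = x) : x = 1 := by
  have hk_cast : (k : ZMod (orderOf x)) = 1 := by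
    rw [← Nat.cast_one, ZMod.natCast_eq_natCast_iff, ← pow_eq_pow_iff_modEq, hxk, pow_one]
  have h_zero : IsUnit (0 : ZMod (orderOf x)) := by
    have h_unit := hk1.map (ZMod.castHom (orderOf_dvd_of_pow_eq_one hxp) (ZMod (orderOf x)))
    rwa [map_sub, map_natCast, map_one, hk_cast, sub_self] at h_unit
  rwa [isUnit_zero_iff, subsingleton_iff_zero_eq_one, ZMod.subsingleton_iff,
    orderOf_eq_one_iff] at h_zero

end ConjugationByPower

/-- The metacyclic group presented by `pqmRels`. It is the semidirect product `C_p ⋊ C_{q^m}` when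
`k ^ q ^ m = 1` modulo `p`. -/
abbrev PQMGroup (p q m k : ℕ) : Type := PresentedGroup (pqmRels p q m k)

namespace PQMGroup

variable {p q m k : ℕ}

/-- The generator `s`, of order `q ^ m`. -/
def s : PQMGroup p q m k := PresentedGroup.of 0

/-- The generator `t`, on which `s` acts by `s⁻¹ * t * s = t ^ k`. It has order `p` when
`k ^ q ^ m = 1` modulo `p`. -/
def t : PQMGroup p q m k := PresentedGroup.of 1

lemma s_pow : (s : PQMGroup p q m k) ^ q ^ m = 1 :=
  PresentedGroup.one_of_mem (x := FreeGroup.of 0 ^ q ^ m) (by simp [pqmRels])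

lemma t_pow : (t : PQMGroup p q m k) ^ p = 1 :=
  PresentedGroup.one_of_mem (x := FreeGroup.of 1 ^ p) (by simp [pqmRels])

lemma semiconjBy_s : SemiconjBy (s : PQMGroup p q m k) (t ^ k) t := by
  have h : (s : PQMGroup p q m k)⁻¹ * t * s = t ^ k :=
    PresentedGroup.mk_eq_mk_of_mul_inv_mem
      (x := (FreeGroup.of 0)⁻¹ * FreeGroup.of 1 * FreeGroup.of 0) (y := FreeGroup.of 1 ^ k)
      (by simp [pqmRels])
  rw [SemiconjBy, ← h]
  group

lemma closure_s_t : Subgroup.closure {(s : PQMGroup p q m k), t} = ⊤ := by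
  rw [← PresentedGroup.closure_range_of]
  congr 1
  ext x
  simp [Fin.exists_fin_two, eq_comm, s, t]

section Lift

variable {H : Type*} [Group H] {x y : H}

/-- The universal property of the presentation, sending `s` to `x` and `t` to `y`. -/
def lift (hx : x ^ q ^ m = 1) (hy : y ^ p = 1) (h : SemiconjBy x (y ^ k) y) :
    PQMGroup p q m k →* H :=
  PresentedGroup.toGroup (f := ![x, y]) <| by
    rintro r (rfl | rfl | rfl)
    · simpa using hy
    · simpa using hx
    · have h_conj : x⁻¹ * y * x = y ^ k := by rw [mul_assoc, ← h.eq, inv_mul_cancel_left]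
      simp [h_conj]

variable (hx : x ^ q ^ m = 1) (hy : y ^ p = 1) (h : SemiconjBy x (y ^ k) y)

@[simp]
lemma lift_s : lift hx hy h s = x :=
  PresentedGroup.toGroup.of _

@[simp]
lemma lift_t : lift hx hy h t = y :=
  PresentedGroup.toGroup.of _

lemma hom_ext {f g : PQMGroup p q m k →* H} (hs : f s = g s) (ht : f t = g t) : f = g :=
  PresentedGroup.ext (Fin.forall_fin_two.2 ⟨hs, ht⟩)

end Lift

/-- The projection onto `⟨s⟩`, identified with `ZMod (q ^ m)`: the exponent of `s`. -/
def sExponent : PQMGroup p q m k →* Multiplicative (ZMod (q ^ m)) :=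
  lift (x := Multiplicative.ofAdd 1) (y := 1)
    (by rw [← ofAdd_nsmul, nsmul_one, ZMod.natCast_self, ofAdd_zero]) (one_pow p) (by simp)

lemma orderOf_sExponent_s : orderOf (sExponent (s : PQMGroup p q m k)) = q ^ m := by
  rw [sExponent, lift_s, orderOf_ofAdd_eq_addOrderOf, ZMod.addOrderOf_one]

lemma orderOf_s : orderOf (s : PQMGroup p q m k) = q ^ m :=
  Nat.dvd_antisymm (orderOf_dvd_of_pow_eq_one s_pow)
    (orderOf_sExponent_s (p := p) (k := k) ▸ orderOf_map_dvd sExponent s)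

lemma sExponent_of_mem_zpowers {x : PQMGroup p q m k} (hx : x ∈ Subgroup.zpowers t) :
    sExponent x = 1 :=
  (Subgroup.zpowers_le (H := sExponent.ker)).2 (lift_t _ _ _) hx

lemma exists_eq_s_pow_mul (hq : q ≠ 0) (g : PQMGroup p q m k) :
    ∃ a : ℕ, ∃ x ∈ Subgroup.zpowers t, g = s ^ a * x :=
  exists_eq_pow_mul_of_closure_pair_eq_top semiconjBy_s
    (isOfFinOrder_iff_pow_eq_one.2 ⟨q ^ m, (pow_ne_zero m hq).pos, s_pow⟩) closure_s_t g

lemma ker_sExponent (hq : q ≠ 0) :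
    (sExponent : PQMGroup p q m k →* _).ker = Subgroup.zpowers t := by
  refine le_antisymm (fun g hg => ?_) fun x hx => sExponent_of_mem_zpowers hx
  obtain ⟨a, x, hx, rfl⟩ := exists_eq_s_pow_mul hq g
  rw [MonoidHom.mem_ker, map_mul, map_pow, sExponent_of_mem_zpowers hx, mul_one,
    ← orderOf_dvd_iff_pow_eq_one, orderOf_sExponent_s, ← orderOf_s (p := p) (k := k),
    orderOf_dvd_iff_pow_eq_one] at hg
  rwa [hg, one_mul]

lemma t_pow_eq_t_pow {a b : ℕ} (h : (a : ZMod p) = b) : (t : PQMGroup p q m k) ^ a = t ^ b :=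
  pow_eq_pow_of_modEq ((ZMod.natCast_eq_natCast_iff a b p).1 h) t_pow

-- `G` acts on `ℤ/p` by affine maps: `t` by `v ↦ 1 + v` and `s` by `v ↦ k⁻¹ * v`.
lemma orderOf_t (hk : (k : ZMod p) ^ q ^ m = 1) (hqm : q ^ m ≠ 0) :
    orderOf (t : PQMGroup p q m k) = p := by
  let κ : (ZMod p)ˣ := Units.ofPowEqOne (k : ZMod p) (q ^ m) hk hqm
  let dilation : Equiv.Perm (ZMod p) := MulAction.toPermHom (ZMod p)ˣ (ZMod p) κ⁻¹
  let translation : Multiplicative (ZMod p) →* Equiv.Perm (ZMod p) :=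
    AddMonoidHom.toMultiplicativeLeft (AddAction.toPermHom (ZMod p) (ZMod p))
  have h_dilation : dilation ^ q ^ m = 1 := by
    rw [← map_pow, inv_pow, Units.pow_ofPowEqOne, inv_one, map_one]
  have h_translation : translation (Multiplicative.ofAdd 1) ^ p = 1 := by
    rw [← map_pow, ← ofAdd_nsmul, nsmul_one, ZMod.natCast_self, ofAdd_zero, map_one]
  have h_semiconj : SemiconjBy dilation (translation (Multiplicative.ofAdd 1) ^ k)
      (translation (Multiplicative.ofAdd 1)) := by
    rw [← map_pow, ← ofAdd_nsmul, nsmul_one]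
    ext v
    change ((κ⁻¹ : (ZMod p)ˣ) : ZMod p) * (k + v) = 1 + (κ⁻¹ : (ZMod p)ˣ) * v
    rw [mul_add, show (k : ZMod p) = κ from rfl, Units.inv_mul]
  have h_order : orderOf (translation (Multiplicative.ofAdd 1)) = p := by
    have h_inj : Function.Injective translation :=
      AddAction.toPerm_injective (α := ZMod p) (β := ZMod p)
    rw [orderOf_injective translation h_inj, orderOf_ofAdd_eq_addOrderOf, ZMod.addOrderOf_one]
  refine Nat.dvd_antisymm (orderOf_dvd_of_pow_eq_one t_pow) ?_
  simpa only [lift_t, h_order] using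
    orderOf_map_dvd (lift h_dilation h_translation h_semiconj) t

lemma s_pow_mem_center (hk : (k : ZMod p) ^ q = 1) {c : ℕ} (hc : q ∣ c) :
    (s : PQMGroup p q m k) ^ c ∈ Subgroup.center (PQMGroup p q m k) := by
  have h_t : (t : PQMGroup p q m k) ^ k ^ c = t := by
    obtain ⟨d, rfl⟩ := hc
    simpa only [pow_one] using t_pow_eq_t_pow (b := 1) (by push_cast; rw [pow_mul, hk, one_pow])
  have h_comm : Commute (s ^ c) (t : PQMGroup p q m k) := by
    have h_semiconj := semiconjBy_pow_pow (semiconjBy_s (p := p) (q := q) (m := m) (k := k)) c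
    rwa [h_t] at h_semiconj
  have h_closure : Subgroup.closure {(s : PQMGroup p q m k), t} ≤ Subgroup.centralizer {s ^ c} := by
    rw [Subgroup.closure_le, Set.pair_subset_iff]
    exact ⟨Subgroup.mem_centralizer_singleton_iff.2 (pow_mul_comm' s c).symm,
      Subgroup.mem_centralizer_singleton_iff.2 h_comm.eq.symm⟩
  rw [closure_s_t] at h_closure
  exact Subgroup.mem_center_iff.2 fun g =>
    Subgroup.mem_centralizer_singleton_iff.1 (h_closure (Subgroup.mem_top g))

lemma eq_one_of_mem_zpowers_of_commute (hk1 : IsUnit ((k : ZMod p) - 1)) {x : PQMGroup p q m k}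
    (hx : x ∈ Subgroup.zpowers t) (hxs : Commute x s) : x = 1 := by
  have hxp : x ^ p = 1 := by
    obtain ⟨j, rfl⟩ := Subgroup.mem_zpowers_iff.1 hx
    rw [← zpow_natCast, zpow_comm, zpow_natCast, t_pow, one_zpow]
  exact eq_one_of_pow_eq_self hk1 hxp
    (mul_left_cancel ((semiconjBy_pow_of_mem_zpowers semiconjBy_s hx).eq.trans hxs.eq))

/-- The endomorphism `s ↦ s ^ c`, `t ↦ t`, which exists because `s ^ c` and `s` act alike on `⟨t⟩`
when `c ≡ 1` modulo `q`. -/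
def powEnd (hk : (k : ZMod p) ^ q = 1) {c : ℕ} (hc : c ≡ 1 [MOD q]) :
    PQMGroup p q m k →* PQMGroup p q m k :=
  lift (x := s ^ c) (y := t) (by rw [pow_right_comm, s_pow, one_pow]) t_pow <| by
    have h_t : (t : PQMGroup p q m k) ^ k ^ c = t ^ k :=
      t_pow_eq_t_pow (by rw [Nat.cast_pow, pow_eq_pow_of_modEq hc hk, pow_one])
    exact h_t ▸ semiconjBy_pow_pow semiconjBy_s c

@[simp]
lemma powEnd_s (hk : (k : ZMod p) ^ q = 1) {c : ℕ} (hc : c ≡ 1 [MOD q]) :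
    powEnd (m := m) hk hc s = s ^ c :=
  lift_s _ _ _

@[simp]
lemma powEnd_t (hk : (k : ZMod p) ^ q = 1) {c : ℕ} (hc : c ≡ 1 [MOD q]) :
    powEnd (m := m) hk hc t = t :=
  lift_t _ _ _

lemma powEnd_comp_powEnd (hk : (k : ZMod p) ^ q = 1) {c d : ℕ} (hc : c ≡ 1 [MOD q])
    (hd : d ≡ 1 [MOD q]) (hcd : c * d ≡ 1 [MOD q ^ m]) :
    (powEnd hk hc).comp (powEnd hk hd) = MonoidHom.id (PQMGroup p q m k) := by
  refine hom_ext ?_ (by simp)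
  simpa [← pow_mul] using pow_eq_pow_of_modEq hcd s_pow

lemma exists_mulAut_s_eq_pow (hk : (k : ZMod p) ^ q = 1) (hq : q ≠ 0) {c : ℕ}
    (hc : c ≡ 1 [MOD q]) : ∃ β : MulAut (PQMGroup p q m k), β s = s ^ c := by
  have h_coprime : c.Coprime (q ^ m) :=
    Nat.Coprime.pow_right m (hc.gcd_eq.trans (Nat.gcd_one_left q))
  let d := c ^ ((q ^ m).totient - 1)
  have hd : d ≡ 1 [MOD q] := by simpa only [one_pow] using hc.pow ((q ^ m).totient - 1)
  have hcd : c * d ≡ 1 [MOD q ^ m] := by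
    rw [mul_pow_sub_one (Nat.totient_pos.2 (pow_ne_zero m hq).pos).ne']
    exact Nat.ModEq.pow_totient h_coprime
  let β : MulAut (PQMGroup p q m k) := MonoidHom.toMulEquiv (powEnd hk hc) (powEnd hk hd)
    (powEnd_comp_powEnd hk hd hc (mul_comm c d ▸ hcd)) (powEnd_comp_powEnd hk hc hd hcd)
  exact ⟨β, powEnd_s (m := m) hk hc⟩

lemma map_t_mem_zpowers (hpq : p.Coprime q) (hq : q ≠ 0)
    (f : PQMGroup p q m k →* PQMGroup p q m k) : f t ∈ Subgroup.zpowers t := by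
  rw [← ker_sExponent hq, MonoidHom.mem_ker]
  have hp : sExponent (f t) ^ p = 1 := by rw [← map_pow, ← map_pow, t_pow, map_one, map_one]
  have hqm : sExponent (f t) ^ q ^ m = 1 := by
    have h_card : Nat.card (Multiplicative (ZMod (q ^ m))) = q ^ m := Nat.card_zmod _
    simpa only [h_card] using pow_card_eq_one' (x := sExponent (f t))
  simpa only [(hpq.pow_right m).gcd_eq_one, pow_one] using pow_gcd_eq_one.2 ⟨hp, hqm⟩

lemma exists_sExponent_map_s (hpq : p.Coprime q) (hq : q ≠ 0) (hm : m ≠ 0)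
    (hk : orderOf (k : ZMod p) = q) (α : MulAut (PQMGroup p q m k)) :
    ∃ c, c ≡ 1 [MOD q] ∧ sExponent (α s) = sExponent (s : PQMGroup p q m k) ^ c := by
  obtain ⟨c, x, hx, hαs⟩ := exists_eq_s_pow_mul hq (α s)
  refine ⟨c, ?_, by rw [hαs, map_mul, map_pow, sExponent_of_mem_zpowers hx, mul_one]⟩
  have hαt : α t ∈ Subgroup.zpowers t := map_t_mem_zpowers hpq hq α.toMonoidHom
  have h_comm : Commute x (α t ^ k ^ c) := by
    obtain ⟨i, rfl⟩ := Subgroup.mem_zpowers_iff.1 hx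
    obtain ⟨j, hj⟩ := Subgroup.mem_zpowers_iff.1 hαt
    exact hj ▸ ((Commute.refl t).zpow_zpow i j).pow_right (k ^ c)
  have h_pow_k : SemiconjBy (α s) (α t ^ k) (α t) := by
    simpa only [map_pow] using semiconjBy_s.map α
  have h_pow_kc : SemiconjBy (α s) (α t ^ k ^ c) (α t) :=
    hαs ▸ (semiconjBy_pow_pow (semiconjBy_pow_of_mem_zpowers semiconjBy_s hαt) c).mul_left h_comm
  have hkqm : (k : ZMod p) ^ q ^ m = 1 :=
    orderOf_dvd_iff_pow_eq_one.1 (hk ▸ dvd_pow_self q hm)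
  have h_kc : (k : ZMod p) ^ c = (k : ZMod p) ^ 1 := by
    have h_eq : α t ^ k ^ c = α t ^ k := mul_left_cancel (h_pow_kc.eq.trans h_pow_k.eq.symm)
    rw [pow_eq_pow_iff_modEq, MulEquiv.orderOf_eq, orderOf_t hkqm (pow_ne_zero m hq),
      ← ZMod.natCast_eq_natCast_iff] at h_eq
    simpa using h_eq
  have h_fin : IsOfFinOrder (k : ZMod p) := orderOf_pos_iff.1 (hk ▸ hq.pos)
  rwa [h_fin.pow_eq_pow_iff_modEq, hk] at h_kc

lemma absoluteCenter_le (hq : q ≠ 0) (hm : m ≠ 0) (hk : (k : ZMod p) ^ q = 1)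
    (hk1 : IsUnit ((k : ZMod p) - 1)) :
    absoluteCenter (PQMGroup p q m k) ≤ Subgroup.zpowers (s ^ q ^ (m - 1)) := by
  intro g hg
  obtain ⟨a, x, hx, rfl⟩ := exists_eq_s_pow_mul hq g
  have hx_comm : Commute x s := by
    have h_comm : Commute s (s ^ a * x) :=
      Subgroup.mem_center_iff.1 (absoluteCenter_le_center hg) s
    simpa using (((Commute.refl s).pow_right a).inv_right.mul_right h_comm).symm
  obtain rfl : x = 1 := eq_one_of_mem_zpowers_of_commute hk1 hx hx_comm
  rw [mul_one] at hg ⊢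
  obtain ⟨β, hβ⟩ := exists_mulAut_s_eq_pow (m := m) hk hq (c := 1 + q) (by simp [Nat.ModEq])
  have h_fixed : (s : PQMGroup p q m k) ^ (a * q) = 1 := by
    have := mem_absoluteCenter_iff.1 hg β
    rwa [map_pow, hβ, pow_right_comm, pow_add, pow_one, ← pow_mul, mul_eq_left] at this
  rw [← orderOf_dvd_iff_pow_eq_one, orderOf_s, ← pow_sub_one_mul hm] at h_fixed
  obtain ⟨c, rfl⟩ := Nat.dvd_of_mul_dvd_mul_right hq.pos h_fixed
  exact pow_mul (s : PQMGroup p q m k) _ c ▸ Subgroup.npow_mem_zpowers _ c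

lemma s_pow_mem_absoluteCenter (hpq : p.Coprime q) (hq : q ≠ 0) (hm : 2 ≤ m)
    (hk : orderOf (k : ZMod p) = q) (hk1 : IsUnit ((k : ZMod p) - 1)) :
    (s : PQMGroup p q m k) ^ q ^ (m - 1) ∈ absoluteCenter (PQMGroup p q m k) := by
  intro (α : MulAut (PQMGroup p q m k))
  set z : PQMGroup p q m k := s ^ q ^ (m - 1) with hz
  have hm0 : m ≠ 0 := by omega
  have h_center : α z * z⁻¹ ∈ Subgroup.center (PQMGroup p q m k) := by
    have hz_center : z ∈ Subgroup.center (PQMGroup p q m k) :=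
      s_pow_mem_center (hk ▸ pow_orderOf_eq_one _) (dvd_pow_self q (by omega))
    exact mul_mem (MulEquivClass.apply_mem_center α hz_center) (inv_mem hz_center)
  have h_mem : α z * z⁻¹ ∈ Subgroup.zpowers t := by
    obtain ⟨c, hc, hαs⟩ := exists_sExponent_map_s hpq hq hm0 hk α
    have h_modEq : q ^ (m - 1) * c ≡ q ^ (m - 1) [MOD q ^ m] := by
      simpa only [mul_one, pow_sub_one_mul hm0] using hc.mul_left' (q ^ (m - 1))
    rw [← ker_sExponent hq, MonoidHom.mem_ker, map_mul, map_inv, mul_inv_eq_one, hz, map_pow,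
      map_pow, map_pow, hαs, pow_right_comm, ← pow_mul, pow_eq_pow_iff_modEq, orderOf_sExponent_s]
    exact h_modEq
  exact mul_inv_eq_one.1
    (eq_one_of_mem_zpowers_of_commute hk1 h_mem (Subgroup.mem_center_iff.1 h_center s).symm)

lemma card_zpowers_s_pow (hq : q ≠ 0) (hm : m ≠ 0) :
    Nat.card (Subgroup.zpowers ((s : PQMGroup p q m k) ^ q ^ (m - 1))) = q := by
  have h_pos : 0 < q ^ (m - 1) := (pow_ne_zero _ hq).pos
  rw [Nat.card_zpowers, orderOf_pow_of_dvd h_pos.ne' (orderOf_s.symm ▸ pow_dvd_pow q (m.sub_le 1)),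
    orderOf_s, ← mul_pow_sub_one hm, Nat.mul_div_cancel _ h_pos]

end PQMGroup

lemma isUnit_natCast_sub_one_of_orderOf_ne_one {p k : ℕ} (hp : p.Prime)
    (hk : orderOf (k : ZMod p) ≠ 1) : IsUnit ((k : ZMod p) - 1) := by
  have := Fact.mk hp
  rwa [isUnit_iff_ne_zero, sub_ne_zero, ne_eq, ← orderOf_eq_one_iff]

theorem absoluteCenter_eq_general {p q m k : ℕ} (hpq : p.Coprime q) (hm : 2 ≤ m)
    (hk : orderOf (k : ZMod p) = q) (hk1 : IsUnit ((k : ZMod p) - 1)) :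
    absoluteCenter (PQMGroup p q m k) = Subgroup.zpowers (PQMGroup.s ^ q ^ (m - 1)) ∧
      Nat.card (Subgroup.zpowers ((PQMGroup.s : PQMGroup p q m k) ^ q ^ (m - 1))) = q := by
  have hm0 : m ≠ 0 := by omega
  have hq : q ≠ 0 := by
    rintro rfl
    obtain rfl : p = 1 := (Nat.coprime_zero_right p).1 hpq
    exact one_ne_zero ((orderOf_eq_one_iff.2 (Subsingleton.elim (k : ZMod 1) 1)).symm.trans hk)
  have hkq : (k : ZMod p) ^ q = 1 := hk ▸ pow_orderOf_eq_one _
  refine ⟨le_antisymm (PQMGroup.absoluteCenter_le hq hm0 hkq hk1) ?_,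
    PQMGroup.card_zpowers_s_pow hq hm0⟩
  exact Subgroup.zpowers_le.2 (PQMGroup.s_pow_mem_absoluteCenter hpq hq hm hk hk1)

/-- For odd primes `p ≡ 1 (mod q)`, `m ≥ 2` and `k` of order `q` mod `p`, the
absolute center of `G = C_p ⋊ C_{q^m} = ⟨s, t | t^p = s^(q^m) = 1, s⁻¹ t s = t^k⟩`
equals `⟨s^(q^(m-1))⟩`, a cyclic group of order `q`. -/
theorem absoluteCenter_eq {p q m k : ℕ} (hp : p.Prime) (hq : q.Prime)
    (hp2 : Odd p) (hq2 : Odd q) (hpq : p % q = 1) (hm : 2 ≤ m)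
    (hk : orderOf (k : ZMod p) = q) :
    letI G := PresentedGroup (pqmRels p q m k)
    letI s : G := PresentedGroup.of 0
    ({g : G | ∀ α : G ≃* G, α g = g} =
        (Subgroup.zpowers (s ^ (q ^ (m - 1))) : Subgroup G)) ∧
      Nat.card (Subgroup.zpowers ((PresentedGroup.of 0 : PresentedGroup (pqmRels p q m k)) ^ (q ^ (m - 1)))) = q := by
  have h_coprime : p.Coprime q := by
    rw [Nat.coprime_comm, Nat.Coprime, Nat.gcd_rec, hpq, Nat.gcd_one_left]
  obtain ⟨h_eq, h_card⟩ := absoluteCenter_eq_general h_coprime hm hk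
    (isUnit_natCast_sub_one_of_orderOf_ne_one hp (hk ▸ hq.ne_one))
  exact ⟨congrArg SetLike.coe h_eq, h_card⟩
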